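/- For every integer n >= 0: \sum_{p=0}^{\lfloor n/2 \rfloor} (1/(2p+1)) * C(3p, p) * C(n+p, 3p) = (1/(n+1)) * C(2n, n). For every integer n >= 1: \sum_{p=0}^{\lfloor (n-1)/2 \rfloor} (1/(2p+1)) * C(3p+1, p+1) * C(n+p, 3p+1) = (1/(n+1)) * C(2n, n). -/

import Mathlib

open Finset

/-!
The power `d + 1` of `1 / (1 - X) = (1 + X) / (1 - X ^ 2)` yields, on comparing coefficients of
`X ^ n`, the convolution `∑ q, C(d+q, d) * C(d+1, n-2q) = C(d+n, d)`. Moving the factor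
`1 / (2p+1)` into the binomial coefficients turns the summands of the two Catalan sums into the
terms of this convolution for `(d, n) = (n, n)` and `(d, n) = (n-1, n+1)`; in the second case the
term `q = 0` vanishes and `q = p + 1`.
-/

section PowerSeries

open PowerSeries

theorem coeff_expand_mul_eq_sum_range {R : Type*} [CommRing R] (p : ℕ) (hp : p ≠ 0)
    (f g : R⟦X⟧) (n : ℕ) :
    coeff n (expand p hp f * g) = ∑ q ∈ range (n / p + 1), coeff q f * coeff (n - p * q) g := by
  have hp' : 0 < p := Nat.pos_of_ne_zero hp
  rw [coeff_mul, Nat.sum_antidiagonal_eq_sum_range_succ_mk]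
  refine (sum_of_injOn (p * ·) (mul_right_injective₀ hp).injOn ?_ ?_ ?_).symm
  · intro q hq
    simp only [coe_range, Set.mem_Iio, Nat.lt_succ_iff, Nat.le_div_iff_mul_le hp'] at hq ⊢
    rwa [mul_comm]
  · intro k hk hk_image
    rw [coeff_expand_of_not_dvd, zero_mul]
    rintro ⟨q, rfl⟩
    refine hk_image ⟨q, ?_, rfl⟩
    simp only [mem_range, coe_range, Set.mem_Iio, Nat.lt_succ_iff,
      Nat.le_div_iff_mul_le hp'] at hk ⊢
    rwa [mul_comm]
  · intro q _
    rw [coeff_expand_mul]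

theorem expand_mk_one_mul_geom_sum (R : Type*) [CommRing R] (p : ℕ) (hp : p ≠ 0) :
    expand p hp (PowerSeries.mk 1 : R⟦X⟧) * ∑ i ∈ range p, X ^ i = PowerSeries.mk 1 := by
  have expand_mul_one_sub : expand p hp (PowerSeries.mk 1 : R⟦X⟧) * (1 - X ^ p) = 1 := by
    simpa using congrArg (expand p hp) (mk_one_mul_one_sub_eq_one R)
  refine left_inv_eq_right_inv (a := 1 - X) ?_ ?_
  · rw [mul_assoc, geom_sum_mul_neg, expand_mul_one_sub]
  · rw [mul_comm, mk_one_mul_one_sub_eq_one]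

theorem expand_mk_choose_mul_geom_sum_pow (R : Type*) [CommRing R] (p : ℕ) (hp : p ≠ 0) (d : ℕ) :
    expand p hp (PowerSeries.mk fun n ↦ ((d + n).choose d : R)) *
        (∑ i ∈ range p, X ^ i) ^ (d + 1) =
      PowerSeries.mk fun n ↦ ((d + n).choose d : R) := by
  rw [← mk_one_pow_eq_mk_choose_add, map_pow, ← mul_pow, expand_mk_one_mul_geom_sum]

theorem coeff_X_add_one_pow (R : Type*) [CommSemiring R] (m k : ℕ) :
    coeff k ((X + 1 : R⟦X⟧) ^ m) = m.choose k := by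
  rw [← Polynomial.coeff_X_add_one_pow, ← Polynomial.coeff_coe]
  simp only [Polynomial.coe_pow, Polynomial.coe_add, Polynomial.coe_X, Polynomial.coe_one]

end PowerSeries

theorem sum_range_add_choose_mul_choose_sub_two_mul (d n : ℕ) :
    ∑ q ∈ range (n / 2 + 1), (d + q).choose d * (d + 1).choose (n - 2 * q) =
      (d + n).choose d := by
  have h := congrArg (PowerSeries.coeff n)
    (expand_mk_choose_mul_geom_sum_pow ℤ 2 two_ne_zero d)
  simp only [coeff_expand_mul_eq_sum_range, PowerSeries.coeff_mk, geom_sum_two,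
    coeff_X_add_one_pow] at h
  exact_mod_cast h

theorem add_one_choose_sub {m j : ℕ} (hj : j ≤ m) :
    (m + 1).choose (m - j) = (m + 1).choose (j + 1) :=
  Nat.choose_symm_of_eq_add (by omega)

theorem sum_range_add_choose_mul_choose_two_mul_add_one (m : ℕ) :
    ∑ p ∈ range (m / 2 + 1), (m + p).choose m * (m + 1).choose (2 * p + 1) =
      (2 * m).choose m := by
  rw [two_mul m, ← sum_range_add_choose_mul_choose_sub_two_mul m m]
  refine sum_congr rfl fun p hp ↦ ?_
  rw [add_one_choose_sub (by grind)]

theorem sum_range_add_succ_choose_mul_choose_two_mul_add_one (m : ℕ) :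
    ∑ p ∈ range (m / 2 + 1), (m + (p + 1)).choose m * (m + 1).choose (2 * p + 1) =
      (2 * (m + 1)).choose m := by
  have first_term_eq_zero : (m + 1).choose (m + 2 - 2 * 0) = 0 :=
    Nat.choose_eq_zero_of_lt (by omega)
  rw [show 2 * (m + 1) = m + (m + 2) by ring, ← sum_range_add_choose_mul_choose_sub_two_mul m,
    Nat.add_div_right m two_pos, sum_range_succ' _ (m / 2 + 1), first_term_eq_zero, mul_zero,
    add_zero]
  refine sum_congr rfl fun p hp ↦ ?_
  rw [mul_add_one, Nat.add_sub_add_right, add_one_choose_sub (by grind)]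

theorem add_one_mul_choose_mul_choose (m j k : ℕ) :
    (m + 1) * ((k + j).choose k * (m + k).choose (k + j)) =
      (j + 1) * ((m + k).choose m * (m + 1).choose (j + 1)) := by
  have trinomial : (m + k).choose (k + j) * (k + j).choose k =
      (m + k).choose m * m.choose j := by
    rw [Nat.choose_mul (Nat.le_add_right k j), Nat.add_sub_cancel, Nat.add_sub_cancel_left,
      Nat.choose_symm_add]
  calc (m + 1) * ((k + j).choose k * (m + k).choose (k + j))
      = (m + k).choose m * ((m + 1) * m.choose j) := by
        rw [mul_comm (Nat.choose _ k), trinomial]; ring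
    _ = (j + 1) * ((m + k).choose m * (m + 1).choose (j + 1)) := by
        rw [Nat.add_one_mul_choose_eq]; ring

theorem one_div_mul_choose_mul_choose (m j k : ℕ) :
    (1 : ℚ) / (j + 1) * (k + j).choose k * (m + k).choose (k + j) =
      1 / (m + 1) * ((m + k).choose m * (m + 1).choose (j + 1) : ℕ) := by
  have h : ((m + 1) * ((k + j).choose k * (m + k).choose (k + j)) : ℚ) =
      (j + 1) * ((m + k).choose m * (m + 1).choose (j + 1) : ℕ) := by
    exact_mod_cast add_one_mul_choose_mul_choose m j k
  field_simp
  linear_combination h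

theorem one_div_mul_choose_two_mul_succ (m : ℕ) :
    (1 : ℚ) / (m + 1) * (2 * (m + 1)).choose m =
      1 / ((m + 1 : ℕ) + 1) * (2 * (m + 1)).choose (m + 1) := by
  have h : ((2 * (m + 1)).choose (m + 1) * (m + 1) : ℚ) =
      (2 * (m + 1)).choose m * ((m + 1 : ℕ) + 1) := by
    have := Nat.choose_succ_right_eq (2 * (m + 1)) m
    rw [show 2 * (m + 1) - m = m + 1 + 1 by omega] at this
    exact_mod_cast this
  field_simp
  linear_combination -h

theorem stmt17 :
    (∀ n : ℕ,
      (∑ p ∈ Finset.range (n / 2 + 1),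
          (1 : ℚ) / (2 * p + 1) * Nat.choose (3 * p) p * Nat.choose (n + p) (3 * p)) =
        (1 : ℚ) / (n + 1) * Nat.choose (2 * n) n) ∧
    ∀ n : ℕ, 1 ≤ n →
      (∑ p ∈ Finset.range ((n - 1) / 2 + 1),
          (1 : ℚ) / (2 * p + 1) * Nat.choose (3 * p + 1) (p + 1) *
            Nat.choose (n + p) (3 * p + 1)) =
        (1 : ℚ) / (n + 1) * Nat.choose (2 * n) n := by
  constructor
  · intro n
    rw [← sum_range_add_choose_mul_choose_two_mul_add_one, Nat.cast_sum, mul_sum]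
    refine sum_congr rfl fun p _ ↦ ?_
    rw [← one_div_mul_choose_mul_choose, show p + 2 * p = 3 * p by ring]
    push_cast
    rfl
  · rintro (_ | m) hn
    · contradiction
    rw [← one_div_mul_choose_two_mul_succ, Nat.add_sub_cancel,
      ← sum_range_add_succ_choose_mul_choose_two_mul_add_one, Nat.cast_sum, mul_sum]
    refine sum_congr rfl fun p _ ↦ ?_
    rw [← one_div_mul_choose_mul_choose, show p + 1 + 2 * p = 3 * p + 1 by ring,
      show m + (p + 1) = m + 1 + p by ring]
    push_cast
    rfl
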